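/- If c is a codeword of the dual code of the binary code spanned by the incidence vectors of lines of Q(4,q) with q even, then the weight of c is at most q^3+q; moreover, if the weight equals q^3+q, then the complement of the support of c in the point set of Q(4,q) is an ovoid. -/

import Mathlib

/-!
In characteristic two the polar form of `v₀v₁ + v₂v₃ + v₄²` does not involve `v₄`, and `v₄` is
determined by the other coordinates of a singular vector because squaring is a bijection of `F`.
Hence forgetting `v₄` identifies the singular vectors with `F⁴` (so there are
`(q⁴ - 1)/(q - 1) = (q + 1)(q² + 1)` points), and the singular vectors orthogonal to a singular
`v ≠ 0` with a hyperplane of `F⁴`, so there are `q³` of them (`card_singPerp`). The `q³ - q` of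
them off `⟨v⟩` are partitioned by the lines through `⟨v⟩`, each containing `q² - q`, so every point
is on exactly `q + 1` lines (`card_lines_through`).

Since a line has `q + 1` points, an odd number, a dual codeword `c` has an odd number of zeros on
each line. The zero set `Z` therefore meets every line, and counting flags gives
`(q + 1)|Z| = ∑_L |Z ∩ L| ≥ #lines = (q + 1)(q² + 1)`, with equality only if every line meets `Z`
exactly once.
-/

open scoped Classical

noncomputable section

variable (F : Type*) [Field F] [Fintype F]

/-- The standard non-singular parabolic quadratic form on `F^5` defining `Q(4,q)`. -/
def Q4Form : (Fin 5 → F) → F := fun v => v 0 * v 1 + v 2 * v 3 + v 4 ^ 2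

/-- Points of the parabolic quadric `Q(4,q)`: singular projective points, i.e.
one-dimensional subspaces on which the form vanishes. -/
def Q4Point := {W : Submodule F (Fin 5 → F) //
  Module.finrank F W = 1 ∧ ∀ v ∈ W, Q4Form F v = 0}

/-- Lines of the parabolic quadric `Q(4,q)`: totally singular two-dimensional subspaces. -/
def Q4Line := {W : Submodule F (Fin 5 → F) //
  Module.finrank F W = 2 ∧ ∀ v ∈ W, Q4Form F v = 0}

section

variable {F}

/-- The polar form of `Q4Form` in characteristic two, as a functional of the first four
coordinates of its second argument. -/
def polar4 (v : Fin 5 → F) : Module.Dual F (Fin 4 → F) :=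
  v 0 • LinearMap.proj 1 + v 1 • LinearMap.proj 0 + v 2 • LinearMap.proj 3
    + v 3 • LinearMap.proj 2

/-- The singular vectors orthogonal to `v`. For `v = 0` these are all singular vectors. -/
def singPerp (v : Fin 5 → F) : Finset (Fin 5 → F) :=
  Finset.univ.filter fun w => Q4Form F w = 0 ∧ polar4 v (fun i => w i.castSucc) = 0

lemma polar4_apply (v w : Fin 5 → F) :
    polar4 v (fun i => w i.castSucc) = v 0 * w 1 + v 1 * w 0 + v 2 * w 3 + v 3 * w 2 := by
  simp [polar4]

lemma Q4Form_comb (a b : F) (v w : Fin 5 → F) (h2 : (2 : F) = 0) :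
    Q4Form F (a • v + b • w) = a ^ 2 * Q4Form F v + b ^ 2 * Q4Form F w
      + a * b * polar4 v (fun i => w i.castSucc) := by
  rw [polar4_apply]
  simp only [Q4Form, Pi.add_apply, Pi.smul_apply, smul_eq_mul]
  linear_combination (a * b * v 4 * w 4) * h2

lemma sq_bijective (h2 : (2 : F) = 0) : Function.Bijective (fun x : F => x ^ 2) := by
  rw [← Finite.injective_iff_bijective]
  intro x y hxy
  have h : (x - y) ^ 2 = 0 := by
    simp only at hxy
    linear_combination hxy + (y ^ 2 - x * y) * h2
  exact sub_eq_zero.mp (pow_eq_zero_iff (two_ne_zero) |>.mp h)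

/-- Forgetting `v₄` is a bijection onto the kernel: `w₄` is the unique square root of
`-(w₀w₁ + w₂w₃)`. -/
lemma card_singPerp_eq_ker (h2 : (2 : F) = 0) (v : Fin 5 → F) :
    (singPerp v).card = Nat.card (LinearMap.ker (polar4 v)) := by
  rw [Nat.card_eq_fintype_card, ← Finset.card_univ]
  refine Finset.card_bij (fun w hw => ⟨fun i => w i.castSucc, ?_⟩) (fun _ _ => Finset.mem_univ _)
    ?_ ?_
  · exact (Finset.mem_filter.mp hw).2.2
  · intro w hw w' hw' h
    have hs := (Finset.mem_filter.mp hw).2.1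
    have hs' := (Finset.mem_filter.mp hw').2.1
    have e (i : Fin 4) : w i.castSucc = w' i.castSucc := congrFun (Subtype.ext_iff.mp h) i
    have e0 : w 0 = w' 0 := e 0
    have e1 : w 1 = w' 1 := e 1
    have e2 : w 2 = w' 2 := e 2
    have e3 : w 3 = w' 3 := e 3
    have e4 : w 4 = w' 4 := by
      apply (sq_bijective h2).1
      simp only [Q4Form, e0, e1, e2, e3] at hs hs' ⊢
      linear_combination hs - hs'
    funext i
    fin_cases i <;> assumption
  · rintro ⟨u, hu⟩ -
    obtain ⟨t, ht⟩ := (sq_bijective h2).2 (-(u 0 * u 1 + u 2 * u 3))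
    have hr : (fun i : Fin 4 => (![u 0, u 1, u 2, u 3, t] : Fin 5 → F) i.castSucc) = u := by
      funext i
      fin_cases i <;> rfl
    refine ⟨![u 0, u 1, u 2, u 3, t], Finset.mem_filter.mpr ⟨Finset.mem_univ _, ?_, ?_⟩,
      Subtype.ext hr⟩
    · change u 0 * u 1 + u 2 * u 3 + t ^ 2 = 0
      linear_combination ht
    · rw [hr]
      exact hu

/-- The radical of the polar form is spanned by the last basis vector, the nucleus, which is not
singular. -/
lemma polar4_ne_zero {v : Fin 5 → F} (hv : v ≠ 0) (hs : Q4Form F v = 0) : polar4 v ≠ 0 := by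
  intro h
  apply hv
  have e (u : Fin 4 → F) : v 0 * u 1 + v 1 * u 0 + v 2 * u 3 + v 3 * u 2 = 0 := by
    simpa [polar4] using LinearMap.congr_fun h u
  have h0 : v 0 = 0 := by simpa using e (Pi.single 1 1)
  have h1 : v 1 = 0 := by simpa using e (Pi.single 0 1)
  have h2 : v 2 = 0 := by simpa using e (Pi.single 3 1)
  have h3 : v 3 = 0 := by simpa using e (Pi.single 2 1)
  have h4 : v 4 = 0 := by simpa [Q4Form, h0, h1, h2, h3] using hs
  funext i
  fin_cases i <;> assumption

lemma card_singPerp (h2 : (2 : F) = 0) {v : Fin 5 → F} (hv : v ≠ 0) (hs : Q4Form F v = 0) :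
    (singPerp v).card = Fintype.card F ^ 3 := by
  rw [card_singPerp_eq_ker h2, Nat.card_eq_fintype_card,
    Module.card_eq_pow_finrank (K := F)]
  have := Module.Dual.finrank_ker_add_one_of_ne_zero (polar4_ne_zero hv hs)
  simp only [Module.finrank_fin_fun] at this
  congr 1
  omega

lemma card_singPerp_zero (h2 : (2 : F) = 0) :
    (singPerp (0 : Fin 5 → F)).card = Fintype.card F ^ 4 := by
  rw [card_singPerp_eq_ker h2]
  have : polar4 (0 : Fin 5 → F) = 0 := by ext; simp [polar4]
  rw [this, LinearMap.ker_zero, Nat.card_eq_fintype_card,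
    Module.card_eq_pow_finrank (K := F), finrank_top, Module.finrank_fin_fun]

instance : Fintype (Q4Point F) := by
  unfold Q4Point
  exact Fintype.ofFinite _

instance : Fintype (Q4Line F) := by
  unfold Q4Line
  exact Fintype.ofFinite _

lemma card_mem (W : Submodule F (Fin 5 → F)) :
    (Finset.univ.filter fun v => v ∈ W).card = Fintype.card F ^ Module.finrank F W := by
  rw [← Module.card_eq_pow_finrank (K := F) (V := W), Fintype.card_subtype]

lemma card_mem_ne_zero (W : Submodule F (Fin 5 → F)) :
    (Finset.univ.filter fun v => v ∈ W ∧ v ≠ 0).card + 1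
      = Fintype.card F ^ Module.finrank F W := by
  rw [← card_mem W, ← Finset.card_erase_add_one (s := Finset.univ.filter fun v => v ∈ W) (a := 0)
    (by simp)]
  congr 2
  ext v
  simp [and_comm]

lemma span_eq_of_point (P : Q4Point F) {v : Fin 5 → F} (hv : v ≠ 0) (h : v ∈ P.1) :
    F ∙ v = P.1 := by
  apply Submodule.eq_of_le_of_finrank_eq
  · simpa using h
  · rw [finrank_span_singleton hv, P.2.1]

/-- Each point of `A` is spanned by `q - 1` vectors, and no vector spans two points. -/
lemma card_vectors_of_points (A : Finset (Q4Point F)) :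
    (Finset.univ.filter fun v => v ≠ 0 ∧ ∃ P ∈ A, v ∈ P.1).card
      = A.card * (Fintype.card F - 1) := by
  have : (Finset.univ.filter fun v => v ≠ 0 ∧ ∃ P ∈ A, v ∈ P.1)
      = A.biUnion fun P => Finset.univ.filter fun v => v ∈ P.1 ∧ v ≠ 0 := by
    ext v
    simp only [Finset.mem_filter, Finset.mem_univ, true_and, Finset.mem_biUnion]
    grind
  rw [this, Finset.card_biUnion]
  · rw [Finset.sum_const_nat]
    intro P _
    have := card_mem_ne_zero P.1
    rw [P.2.1, pow_one] at this
    omega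
  · intro P _ P' _ hne
    refine Finset.disjoint_left.mpr ?_
    intro v hv hv'
    simp only [Finset.mem_filter, Finset.mem_univ, true_and] at hv hv'
    exact hne (Subtype.ext ((span_eq_of_point P hv.2 hv.1).symm.trans
      (span_eq_of_point P' hv'.2 hv'.1)))

/-- The point spanned by a nonzero singular vector. -/
def pointOf (v : Fin 5 → F) (hv : v ≠ 0) (hs : Q4Form F v = 0) : Q4Point F :=
  ⟨F ∙ v, finrank_span_singleton hv, by
    intro w hw
    obtain ⟨a, rfl⟩ := Submodule.mem_span_singleton.mp hw
    simp only [Q4Form, Pi.smul_apply, smul_eq_mul] at hs ⊢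
    linear_combination a ^ 2 * hs⟩

lemma card_points (h2 : (2 : F) = 0) :
    Fintype.card (Q4Point F) = (Fintype.card F + 1) * (Fintype.card F ^ 2 + 1) := by
  have h := card_vectors_of_points (Finset.univ : Finset (Q4Point F))
  have e : (Finset.univ.filter fun v => v ≠ 0 ∧ ∃ P ∈ (Finset.univ : Finset (Q4Point F)), v ∈ P.1)
      = (singPerp 0).erase 0 := by
    ext v
    simp only [Finset.mem_filter, Finset.mem_univ, true_and, Finset.mem_erase, singPerp]
    refine and_congr_right fun hv => ⟨?_, ?_⟩
    · rintro ⟨P, hP⟩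
      exact ⟨P.2.2 v hP, by simp [polar4]⟩
    · rintro ⟨hs, -⟩
      exact ⟨pointOf v hv hs, Submodule.mem_span_singleton_self v⟩
  rw [e, Finset.card_erase_of_mem (by simp [singPerp, Q4Form, polar4]), card_singPerp_zero h2,
    Finset.card_univ] at h
  obtain ⟨r, hr⟩ : ∃ r, Fintype.card F = r + 2 :=
    ⟨_, (Nat.sub_add_cancel Fintype.one_lt_card).symm⟩
  rw [hr] at h ⊢
  have e1 : (r + 2) ^ 4 - 1 = ((r + 2 + 1) * ((r + 2) ^ 2 + 1)) * (r + 2 - 1) := by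
    rw [Nat.sub_eq_iff_eq_add (Nat.one_le_pow _ _ (by omega)), show r + 2 - 1 = r + 1 by omega]
    ring
  rw [e1] at h
  exact (Nat.eq_of_mul_eq_mul_right (by omega) h).symm

lemma card_points_on (L : Q4Line F) :
    (Finset.univ.filter fun P : Q4Point F => P.1 ≤ L.1).card = Fintype.card F + 1 := by
  have h := card_vectors_of_points (Finset.univ.filter fun P : Q4Point F => P.1 ≤ L.1)
  have e : (Finset.univ.filter fun v => v ≠ 0 ∧
      ∃ P ∈ (Finset.univ.filter fun P : Q4Point F => P.1 ≤ L.1), v ∈ P.1)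
      = Finset.univ.filter fun v => v ∈ L.1 ∧ v ≠ 0 := by
    ext v
    simp only [Finset.mem_filter, Finset.mem_univ, true_and]
    rw [and_comm]
    refine and_congr_left fun hv => ⟨?_, ?_⟩
    · rintro ⟨P, hP, hvP⟩
      exact hP hvP
    · intro hvL
      exact ⟨pointOf v hv (L.2.2 v hvL), by simpa [pointOf] using hvL,
        Submodule.mem_span_singleton_self v⟩
  have h3 := card_mem_ne_zero L.1
  rw [← e, L.2.1] at h3
  have h4 : (Finset.univ.filter fun P : Q4Point F => P.1 ≤ L.1).card * (Fintype.card F - 1) + 1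
      = Fintype.card F ^ 2 := by
    rw [← h, ← h3]
    congr!
  clear h h3 e
  obtain ⟨r, hr⟩ : ∃ r, Fintype.card F = r + 2 :=
    ⟨_, (Nat.sub_add_cancel Fintype.one_lt_card).symm⟩
  rw [hr] at h4 ⊢
  rw [show r + 2 - 1 = r + 1 by omega] at h4
  refine Nat.eq_of_mul_eq_mul_right (show 0 < r + 1 by omega) ?_
  nlinarith

lemma finrank_span_pair {v w : Fin 5 → F} (hv : v ≠ 0) (hw : w ∉ F ∙ v) :
    Module.finrank F (Submodule.span F {v, w}) = 2 := by
  have hli : LinearIndependent F ![v, w] := by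
    rw [LinearIndependent.pair_iff' hv]
    intro a ha
    exact hw (Submodule.mem_span_singleton.mpr ⟨a, ha⟩)
  have := finrank_span_eq_card hli
  rwa [Matrix.range_cons_cons_empty, Fintype.card_fin] at this

lemma line_eq_span (L : Q4Line F) {v w : Fin 5 → F} (hv : v ≠ 0) (hw : w ∉ F ∙ v)
    (hvL : v ∈ L.1) (hwL : w ∈ L.1) : Submodule.span F {v, w} = L.1 := by
  apply Submodule.eq_of_le_of_finrank_eq
  · rw [Submodule.span_le]
    rintro x (rfl | rfl) <;> assumption
  · rw [L.2.1]
    exact finrank_span_pair hv hw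

/-- The lines through `P` partition the singular vectors orthogonal to `P` but not in `P`. -/
lemma card_lines_through (h2 : (2 : F) = 0) (P : Q4Point F) :
    (Finset.univ.filter fun L : Q4Line F => P.1 ≤ L.1).card = Fintype.card F + 1 := by
  obtain ⟨v, hvP, hv⟩ : ∃ v ∈ P.1, v ≠ 0 := by
    apply Submodule.exists_mem_ne_zero_of_ne_bot
    intro h
    have := P.2.1
    rw [h, finrank_bot] at this
    exact zero_ne_one this
  have hs := P.2.2 v hvP
  have hPv := span_eq_of_point P hv hvP
  have hle (L : Q4Line F) : P.1 ≤ L.1 ↔ v ∈ L.1 := by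
    rw [← hPv, Submodule.span_singleton_le_iff_mem]
  have hPsub : (Finset.univ.filter fun w => w ∈ P.1) ⊆ singPerp v := by
    intro w hw
    simp only [Finset.mem_filter, Finset.mem_univ, true_and, singPerp] at hw ⊢
    refine ⟨P.2.2 w hw, ?_⟩
    have := Q4Form_comb 1 1 v w h2
    rw [P.2.2 _ (P.1.add_mem (P.1.smul_mem _ hvP) (P.1.smul_mem _ hw)), hs, P.2.2 w hw] at this
    simpa using this.symm
  have e : singPerp v \ (Finset.univ.filter fun w => w ∈ P.1)
      = (Finset.univ.filter fun L : Q4Line F => P.1 ≤ L.1).biUnion fun L =>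
        (Finset.univ.filter fun w => w ∈ L.1) \ (Finset.univ.filter fun w => w ∈ P.1) := by
    ext w
    simp only [Finset.mem_filter, Finset.mem_univ, true_and, singPerp, Finset.mem_sdiff,
      Finset.mem_biUnion, hle]
    constructor
    · rintro ⟨⟨hw, hvw⟩, hwP⟩
      refine ⟨⟨Submodule.span F {v, w}, finrank_span_pair hv (hPv ▸ hwP), ?_⟩,
        Submodule.subset_span (by simp), Submodule.subset_span (by simp), hwP⟩
      intro x hx
      obtain ⟨a, b, rfl⟩ := Submodule.mem_span_pair.mp hx
      rw [Q4Form_comb a b v w h2, hs, hw, hvw]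
      ring
    · rintro ⟨L, hvL, hwL, hwP⟩
      refine ⟨⟨L.2.2 w hwL, ?_⟩, hwP⟩
      have := Q4Form_comb 1 1 v w h2
      rw [L.2.2 _ (L.1.add_mem (L.1.smul_mem _ hvL) (L.1.smul_mem _ hwL)), hs,
        L.2.2 w hwL] at this
      simpa using this.symm
  have hcard := congrArg Finset.card e
  rw [Finset.card_biUnion, Finset.sum_const_nat (m := Fintype.card F ^ 2 - Fintype.card F),
    Finset.card_sdiff_of_subset hPsub, card_singPerp h2 hv hs, card_mem, P.2.1, pow_one] at hcard
  · obtain ⟨r, hr⟩ : ∃ r, Fintype.card F = r + 2 :=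
      ⟨_, (Nat.sub_add_cancel Fintype.one_lt_card).symm⟩
    rw [hr] at hcard ⊢
    have e1 : (r + 2) ^ 3 - (r + 2) = (r + 2 + 1) * ((r + 2) * (r + 1)) :=
      Nat.sub_eq_of_eq_add (by ring)
    have e2 : (r + 2) ^ 2 - (r + 2) = (r + 2) * (r + 1) := Nat.sub_eq_of_eq_add (by ring)
    rw [e1, e2] at hcard
    exact (Nat.eq_of_mul_eq_mul_right (by positivity) hcard).symm
  · intro L hL
    rw [Finset.card_sdiff_of_subset, card_mem, card_mem, L.2.1, P.2.1, pow_one]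
    intro w hw
    simp only [Finset.mem_filter, Finset.mem_univ, true_and] at hw hL ⊢
    exact hL hw
  · intro L hL L' hL' hne
    refine Finset.disjoint_left.mpr ?_
    intro w hw hw'
    simp only [Finset.mem_coe, Finset.mem_filter, Finset.mem_univ, true_and, Finset.mem_sdiff,
      hle] at hL hL' hw hw'
    have hwv : w ∉ F ∙ v := hPv ▸ hw.2
    exact hne (Subtype.ext ((line_eq_span L hv hwv hL hw.1).symm.trans
      (line_eq_span L' hv hwv hL' hw'.1)))

/-- Counting the flags `(P, L)` with `P ∈ A` in two ways. -/
lemma sum_card_inter (h2 : (2 : F) = 0) (A : Finset (Q4Point F)) :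
    ∑ L : Q4Line F, (A.filter fun P => P.1 ≤ L.1).card = A.card * (Fintype.card F + 1) := by
  have := Finset.sum_card_bipartiteAbove_eq_sum_card_bipartiteBelow
    (s := A) (t := (Finset.univ : Finset (Q4Line F))) (fun P L => P.1 ≤ L.1)
  simp only [Finset.bipartiteAbove, Finset.bipartiteBelow] at this
  rw [← this]
  exact Finset.sum_const_nat fun P _ => card_lines_through h2 P

lemma card_lines (h2 : (2 : F) = 0) :
    Fintype.card (Q4Line F) = (Fintype.card F + 1) * (Fintype.card F ^ 2 + 1) := by
  have h := sum_card_inter h2 (Finset.univ : Finset (Q4Point F))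
  rw [Finset.sum_const_nat fun L _ => card_points_on L, Finset.card_univ, Finset.card_univ,
    card_points h2] at h
  exact Nat.eq_of_mul_eq_mul_right (by omega) h

end

/-- If `c` is a codeword of the dual of the binary code of points and lines of `Q(4,q)`,
`q` even, then `wt(c) ≤ q^3 + q`; and if `wt(c) = q^3 + q` then the complement of the
support of `c` is an ovoid of `Q(4,q)`. -/
theorem dual_code_Q4_max_weight (q : ℕ) (hq : Fintype.card F = q) (hqe : Even q)
    (c : Q4Point F → ZMod 2)
    (hc : ∀ L : Q4Line F, ∑ᶠ P ∈ {P : Q4Point F | P.1 ≤ L.1}, c P = 0) :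
    Set.ncard {P : Q4Point F | c P ≠ 0} ≤ q ^ 3 + q ∧
      (Set.ncard {P : Q4Point F | c P ≠ 0} = q ^ 3 + q →
        ∀ L : Q4Line F, ∃! P : Q4Point F, c P = 0 ∧ P.1 ≤ L.1) := by
  subst hq
  have h2 : (2 : F) = 0 := by
    have : CharP F 2 := ringChar.of_eq
      (FiniteField.even_card_iff_char_two.mpr (Nat.even_iff.mp hqe))
    exact CharTwo.two_eq_zero
  set Z : Finset (Q4Point F) := Finset.univ.filter fun P => c P = 0 with hZ
  have hodd (L : Q4Line F) : Odd (Z.filter fun P => P.1 ≤ L.1).card := by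
    have hsum := hc L
    have hset : {P : Q4Point F | P.1 ≤ L.1}
        = ↑(Finset.univ.filter fun P : Q4Point F => P.1 ≤ L.1) := by ext; simp
    rw [hset, finsum_mem_coe_finset] at hsum
    have hval (P : Q4Point F) : c P = 1 - if c P = 0 then 1 else 0 := by
      generalize c P = x
      revert x
      decide
    -- modulo 2, the sum of `c` over `L` is `q + 1` minus the number of zeros of `c` on `L`
    rw [Finset.sum_congr rfl fun P _ => hval P, Finset.sum_sub_distrib, Finset.sum_const,
      card_points_on, Finset.sum_boole, Finset.filter_filter, nsmul_one, sub_eq_zero] at hsum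
    have hf : (Z.filter fun P => P.1 ≤ L.1)
        = Finset.univ.filter fun P : Q4Point F => P.1 ≤ L.1 ∧ c P = 0 := by
      ext P
      simp [hZ, and_comm]
    rw [hf, ← ZMod.natCast_eq_one_iff_odd, ← hsum, ZMod.natCast_eq_one_iff_odd]
    exact hqe.add_one
  have hflags := sum_card_inter h2 Z
  have hlines := card_lines (F := F) h2
  have hle (L : Q4Line F) : 1 ≤ (Z.filter fun P => P.1 ≤ L.1).card := (hodd L).pos
  have hone : ∑ _L : Q4Line F, 1 = (Fintype.card F + 1) * (Fintype.card F ^ 2 + 1) := by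
    simp [← hlines]
  have hZcard : Fintype.card F ^ 2 + 1 ≤ Z.card := by
    have := Finset.sum_le_sum fun L (_ : L ∈ Finset.univ) => hle L
    rw [hone, hflags, mul_comm] at this
    exact Nat.le_of_mul_le_mul_right this (by omega)
  have hW : Set.ncard {P : Q4Point F | c P ≠ 0} + Z.card
      = (Fintype.card F + 1) * (Fintype.card F ^ 2 + 1) := by
    have hset : {P : Q4Point F | c P ≠ 0} = ↑(Finset.univ.filter fun P => ¬ c P = 0) := by
      ext; simp
    rw [hset, Set.ncard_coe_finset, ← card_points h2, ← Finset.card_univ, add_comm, hZ]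
    exact Finset.card_filter_add_card_filter_not _
  have hexp : (Fintype.card F + 1) * (Fintype.card F ^ 2 + 1)
      = Fintype.card F ^ 3 + Fintype.card F + (Fintype.card F ^ 2 + 1) := by ring
  refine ⟨by omega, fun heq L => ?_⟩
  have hZeq : Z.card = Fintype.card F ^ 2 + 1 := by omega
  have hall := (Finset.sum_eq_sum_iff_of_le fun L (_ : L ∈ Finset.univ) => hle L).mp
    (by rw [hone, hflags, hZeq, mul_comm])
  obtain ⟨P, hP⟩ := Finset.card_eq_one.mp (hall L (Finset.mem_univ L)).symm
  have hmem (P' : Q4Point F) : (c P' = 0 ∧ P'.1 ≤ L.1) ↔ P' = P := by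
    have := Finset.ext_iff.mp hP P'
    simpa [hZ] using this
  exact ⟨P, (hmem P).mpr rfl, fun P' h => (hmem P').mp h⟩
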